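/- Let V : [0,∞) → ℝ be a right-continuous function with left limits, of finite variation on every compact interval, with canonical decomposition V = V^c + V^d into its continuous part V^c and pure-jump part V^d. Then for every t > 0 and all bounded measurable functions f : ℝ → ℝ and g : [0,t] → ℝ, ∫_0^t f(V(s)) g(s) |V^c(ds)| = ∫_ℝ ( ∫_{[0,t]} g(s) λ^x(ds) ) f(x) dx, where for Lebesgue-almost every x the point measure λ^x(ds) places a unit atom at each time in ℐ(x) ∪ 𝒟(x). -/

import Mathlib

open MeasureTheory Set Filter
open scoped ENNReal NNReal

noncomputable section

/-- `V` increases through the level `x` at time `t`: `t > 0`, `V t = x`, `V` is continuous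
at `t` (within the domain `[0,∞)`), and `V s - V t` has the same sign as `s - t` for all
`s ≥ 0` in some neighborhood of `t`. -/
def IncreasesThrough (V : ℝ → ℝ) (x t : ℝ) : Prop :=
  0 < t ∧ V t = x ∧ ContinuousWithinAt V (Set.Ici 0) t ∧
    ∃ ε > 0, ∀ s ∈ Set.Ici (0 : ℝ), |s - t| < ε →
      ((s < t → V s < V t) ∧ (t < s → V t < V s))

/-- `V` decreases through the level `x` at time `t` iff `-V` increases through `-x` at `t`. -/
def DecreasesThrough (V : ℝ → ℝ) (x t : ℝ) : Prop :=
  IncreasesThrough (fun s => -V s) (-x) t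

/-- `(0,t] ∩ ℐ(x)`: the increasing passage times of `V` through `x` up to time `t`. -/
def incSet (V : ℝ → ℝ) (x t : ℝ) : Set ℝ :=
  {s | s ∈ Set.Ioc 0 t ∧ IncreasesThrough V x s}

/-- `(0,t] ∩ 𝒟(x)`: the decreasing passage times of `V` through `x` up to time `t`. -/
def decSet (V : ℝ → ℝ) (x t : ℝ) : Set ℝ :=
  {s | s ∈ Set.Ioc 0 t ∧ DecreasesThrough V x s}

/-- The signed local time `ℓ^x(t) = Card((0,t] ∩ ℐ(x)) − Card((0,t] ∩ 𝒟(x))`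
(meaningful when both sets are finite). -/
def signedLocalTime (V : ℝ → ℝ) (x t : ℝ) : ℤ :=
  ((incSet V x t).ncard : ℤ) - ((decSet V x t).ncard : ℤ)

/-- The absolute local time `λ^x(t) = Card((0,t] ∩ ℐ(x)) + Card((0,t] ∩ 𝒟(x))`
(meaningful when both sets are finite). -/
def absLocalTime (V : ℝ → ℝ) (x t : ℝ) : ℕ :=
  (incSet V x t).ncard + (decSet V x t).ncard


/-- cumulative function of a finite measure as a Stieltjes function -/
def cumF (m : Measure ℝ) [IsFiniteMeasure m] : StieltjesFunction ℝ where
  toFun s := m.real (Set.Iic s)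
  mono' := fun a b hab => measureReal_mono (Set.Iic_subset_Iic.2 hab)
  right_continuous' := by
    intro x
    rw [← continuousWithinAt_Ioi_iff_Ici]
    have h : Tendsto (m ∘ fun r => Set.Iic r) (nhdsWithin x (Set.Ioi x))
        (nhds (m (⋂ r > x, Set.Iic r))) := by
      apply tendsto_measure_biInter_gt
      · intro r _; exact measurableSet_Iic.nullMeasurableSet
      · intro i j _ hij; exact Set.Iic_subset_Iic.2 hij
      · exact ⟨x + 1, by simp, measure_ne_top _ _⟩
    have e : (⋂ r > x, Set.Iic r) = Set.Iic x := by
      ext y; simp only [Set.mem_iInter, Set.mem_Iic]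
      exact ⟨fun h => le_of_forall_gt_imp_ge_of_dense h, fun h r hr => h.trans hr.le⟩
    rw [e] at h
    exact (ENNReal.tendsto_toReal (measure_ne_top _ _)).comp h

lemma cumF_apply (m : Measure ℝ) [IsFiniteMeasure m] (s : ℝ) : cumF m s = m.real (Set.Iic s) := rfl

lemma cumF_sub (m : Measure ℝ) [IsFiniteMeasure m] {a b : ℝ} (hab : a ≤ b) :
    cumF m b - cumF m a = m.real (Set.Ioc a b) := by
  rw [cumF_apply, cumF_apply, ← Set.Iic_union_Ioc_eq_Iic hab,
    measureReal_union (Set.Iic_disjoint_Ioc le_rfl) measurableSet_Ioc]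
  ring

lemma cumF_measure (m : Measure ℝ) [IsFiniteMeasure m] : (cumF m).measure = m := by
  refine Measure.ext_of_Ioc _ _ ?_
  intro a b hab
  rw [StieltjesFunction.measure_Ioc, cumF_sub m hab.le]
  simp

lemma cumF_continuous (m : Measure ℝ) [IsFiniteMeasure m] [NullSingletonClass m] : Continuous (cumF m) := by
  rw [continuous_iff_continuousAt]
  intro x
  rw [(cumF m).mono.continuousAt_iff_leftLim_eq_rightLim, StieltjesFunction.rightLim_eq]
  have h : (cumF m).measure {x} = 0 := by rw [cumF_measure]; simp
  rw [StieltjesFunction.measure_singleton, ENNReal.ofReal_eq_zero] at h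
  exact le_antisymm ((cumF m).mono.leftLim_le le_rfl) (by linarith)

lemma volume_image_le (U : ℝ → ℝ) (Φ : StieltjesFunction ℝ)
    (h : ∀ a b, a ≤ b → |U b - U a| ≤ Φ b - Φ a) (E : Set ℝ) :
    volume (U '' E) ≤ Φ.measure E := by
  have key : OuterMeasure.comap U (volume : Measure ℝ).toOuterMeasure ≤ Φ.outer := by
    refine OuterMeasure.le_ofFunction.2 ?_
    intro s
    rw [StieltjesFunction.length_eq]
    refine le_iInf fun a => le_iInf fun b => le_iInf fun hs => ?_
    have hs' : s ⊆ Set.Ioc a b := by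
      have hb : (botSet : Set ℝ) = ∅ := by
        ext z; simp [botSet]
      simpa [hb] using hs
    rw [OuterMeasure.comap_apply]
    change volume (U '' s) ≤ _
    refine (Real.volume_le_diam _).trans ?_
    refine Metric.ediam_le ?_
    rintro _ ⟨x, hx, rfl⟩ _ ⟨y, hy, rfl⟩
    have hx' := hs' hx
    have hy' := hs' hy
    rw [edist_dist]
    apply ENNReal.ofReal_le_ofReal
    rw [Real.dist_eq]
    rcases le_total x y with hxy | hxy
    · have := h x y hxy
      have h1 := Φ.mono hx'.1.le
      have h2 := Φ.mono hy'.2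
      rw [abs_sub_comm]; linarith
    · have := h y x hxy
      have h1 := Φ.mono hy'.1.le
      have h2 := Φ.mono hx'.2
      linarith
  have e : Φ.measure E = Φ.outer E := by
    rw [StieltjesFunction.measure]; rfl
  rw [e]
  exact key E

/-- the time change -/
def timeG (τ : Measure ℝ) [IsFiniteMeasure τ] [NullSingletonClass τ] : ℝ ≃o ℝ :=
  StrictMono.orderIsoOfSurjective (fun s => s + cumF τ s)
    (fun a b hab => add_lt_add_of_lt_of_le hab ((cumF τ).mono hab.le))
    ((continuous_id.add (cumF_continuous τ)).surjective
      (tendsto_atTop_add_right_of_le _ 0 tendsto_id (fun x => measureReal_nonneg))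
      (tendsto_atBot_add_right_of_ge _ (τ.real Set.univ) tendsto_id
        (fun x => measureReal_mono (Set.subset_univ _))))

lemma timeG_apply (τ : Measure ℝ) [IsFiniteMeasure τ] [NullSingletonClass τ] (s : ℝ) :
    timeG τ s = s + cumF τ s := rfl

lemma timeG_map (τ : Measure ℝ) [IsFiniteMeasure τ] [NullSingletonClass τ] :
    (volume + τ).map (timeG τ) = volume := by
  refine (Measure.ext_of_Ioc _ _ ?_).symm
  intro a b hab
  have hm : Measurable (timeG τ) := (timeG τ).continuous.measurable
  rw [Measure.map_apply hm measurableSet_Ioc]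
  obtain ⟨a, rfl⟩ := (timeG τ).surjective a
  obtain ⟨b, rfl⟩ := (timeG τ).surjective b
  have hab' : a ≤ b := by simpa using hab.le
  have : (timeG τ) ⁻¹' (Set.Ioc (timeG τ a) (timeG τ b)) = Set.Ioc a b := by ext; simp
  rw [this, Measure.add_apply, Real.volume_Ioc, Real.volume_Ioc, timeG_apply, timeG_apply]
  have h := cumF_sub τ hab'
  have : τ (Set.Ioc a b) = ENNReal.ofReal (τ.real (Set.Ioc a b)) := by simp
  rw [this, ← ENNReal.ofReal_add (by linarith) measureReal_nonneg, ← h]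
  congr 1; ring

lemma exists_partition_inj (U φ : ℝ → ℝ) (D : Set ℝ) (hD : MeasurableSet D)
    (hd : ∀ u ∈ D, HasDerivAt U (φ u) u) (h0 : ∀ u ∈ D, φ u ≠ 0) :
    ∃ Dn : ℕ → Set ℝ, Pairwise (Function.onFun Disjoint Dn) ∧ (∀ n, MeasurableSet (Dn n)) ∧
      D = ⋃ n, Dn n ∧ ∀ n, Set.InjOn U (Dn n) := by
  rcases D.eq_empty_or_nonempty with rfl | hne
  · exact ⟨fun _ => ∅, fun i j _ => by simp [Function.onFun], by simp, by simp, by simp⟩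
  let r : (ℝ →L[ℝ] ℝ) → ℝ≥0 := fun A => if A 1 = 0 then 1 else ‖A 1‖₊ / 2
  have hr : ∀ A, r A ≠ 0 := by
    intro A; dsimp only [r]; split_ifs with h
    · exact one_ne_zero
    · simpa using h
  obtain ⟨t, A, hdis, hmeas, hsub, happ, hA⟩ := exists_partition_approximatesLinearOn_of_hasFDerivWithinAt
    U D (fun u => ContinuousLinearMap.toSpanSingleton ℝ (φ u))
    (fun u hu => (hd u hu).hasFDerivAt.hasFDerivWithinAt) r hr
  refine ⟨fun n => D ∩ t n, ?_, fun n => hD.inter (hmeas n), ?_, ?_⟩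
  · intro i j hij
    exact (hdis hij).mono Set.inter_subset_right Set.inter_subset_right
  · rw [← Set.inter_iUnion, Set.inter_eq_left.2 hsub]
  · intro n x hx y hy hxy
    obtain ⟨u, hu, hAu⟩ := hA hne n
    have h1 := happ n x hx y hy
    have hA1 : A n 1 = φ u := by rw [hAu]; simp
    have hAx : A n (x - y) = (x - y) * φ u := by rw [hAu]; simp
    have hrA : (r (A n) : ℝ) = |φ u| / 2 := by
      simp only [r, hA1, if_neg (h0 u hu)]; simp
    rw [hxy, hAx, hrA, sub_self, zero_sub, norm_neg, norm_mul, Real.norm_eq_abs, Real.norm_eq_abs] at h1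
    have h2 : 0 < |φ u| := abs_pos.2 (h0 u hu)
    by_contra hne'
    have h3 : 0 < |x - y| := abs_pos.2 (sub_ne_zero.2 hne')
    nlinarith [mul_pos h2 h3]

lemma core1 (U φ : ℝ → ℝ) (hφ : Measurable φ) (hU : Measurable U)
    (hd : ∀ᵐ u : ℝ, HasDerivAt U (φ u) u)
    (hN : ∀ N : Set ℝ, volume N = 0 → volume (U '' N) = 0) :
    (∀ᵐ x : ℝ, ∀ u, U u = x → HasDerivAt U (φ u) u ∧ φ u ≠ 0) ∧
    ∀ H : ℝ → ℝ≥0∞, Measurable H →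
      AEMeasurable (fun x => ∑' u : ℝ, (U ⁻¹' {x}).indicator H u) ∧
      ∫⁻ u, ENNReal.ofReal |φ u| * H u = ∫⁻ x, ∑' u : ℝ, (U ⁻¹' {x}).indicator H u := by
  obtain ⟨E, hE1, hE2, hE3⟩ : ∃ E : Set ℝ, (∀ u ∈ E, HasDerivAt U (φ u) u) ∧ MeasurableSet E ∧
      volume Eᶜ = 0 := by
    refine ⟨(toMeasurable volume {u | ¬ HasDerivAt U (φ u) u})ᶜ, ?_,
      (measurableSet_toMeasurable _ _).compl, ?_⟩
    · intro u hu
      by_contra h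
      exact hu (subset_toMeasurable _ _ h)
    · rw [compl_compl, measure_toMeasurable]; exact hd
  set D := E ∩ {u | φ u ≠ 0} with hDdef
  have hDm : MeasurableSet D := hE2.inter (hφ (measurableSet_singleton 0)).compl
  have hz : volume (U '' (E ∩ {u | φ u = 0})) = 0 := by
    refine addHaar_image_eq_zero_of_det_fderivWithin_eq_zero volume
      (f' := fun u => ContinuousLinearMap.toSpanSingleton ℝ (φ u)) ?_ ?_
    · intro u hu; exact (hE1 u hu.1).hasFDerivAt.hasFDerivWithinAt
    · intro u hu
      have : φ u = 0 := hu.2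
      simp [this]
  have hgood : ∀ᵐ x : ℝ, ∀ u, U u = x → u ∈ D := by
    have h1 : ∀ᵐ x : ℝ, x ∉ U '' Eᶜ := measure_eq_zero_iff_ae_notMem.1 (hN _ hE3)
    have h2 : ∀ᵐ x : ℝ, x ∉ U '' (E ∩ {u | φ u = 0}) := measure_eq_zero_iff_ae_notMem.1 hz
    filter_upwards [h1, h2] with x h1 h2 u hu
    have hE : u ∈ E := by
      by_contra h; exact h1 ⟨u, h, hu⟩
    exact ⟨hE, fun h => h2 ⟨u, ⟨hE, h⟩, hu⟩⟩
  refine ⟨?_, ?_⟩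
  · filter_upwards [hgood] with x hx u hu
    exact ⟨hE1 u (hx u hu).1, (hx u hu).2⟩
  intro H hH
  obtain ⟨Dn, hdis, hmeas, hDn, hinj⟩ := exists_partition_inj U φ D hDm
    (fun u hu => hE1 u hu.1) (fun u hu => hu.2)
  let e : ∀ n, Dn n → ℝ := fun n u => U u
  have he : ∀ n, MeasurableEmbedding (e n) := fun n => by
    have := (hmeas n).standardBorel
    exact (hU.comp measurable_subtype_coe).measurableEmbedding
      (fun a b hab => Subtype.ext (hinj n a.2 b.2 hab))
  let K : ℕ → ℝ → ℝ≥0∞ := fun n => Function.extend (e n) (fun u => H u) 0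
  have hK : ∀ n, Measurable (K n) := fun n =>
    (he n).measurable_extend (hH.comp measurable_subtype_coe) measurable_zero
  have hKv : ∀ n, ∀ u ∈ Dn n, K n (U u) = H u := fun n u hu =>
    (he n).injective.extend_apply (fun u : Dn n => H u) 0 ⟨u, hu⟩
  have hK0 : ∀ n x, x ∉ U '' Dn n → K n x = 0 := fun n x hx => by
    refine Function.extend_apply' _ _ _ ?_
    rintro ⟨a, rfl⟩
    exact hx ⟨a, a.2, rfl⟩
  have hsum : ∀ᵐ x : ℝ, ∑' u : ℝ, (U ⁻¹' {x}).indicator H u = ∑' n, K n x := by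
    filter_upwards [hgood] with x hx
    have h1 : ∀ u, (U ⁻¹' {x}).indicator H u = ∑' n, (Dn n ∩ U ⁻¹' {x}).indicator H u := by
      intro u
      by_cases hu : U u = x
      · have huD := hx u hu
        rw [hDn] at huD
        obtain ⟨n, hn⟩ := Set.mem_iUnion.1 huD
        rw [tsum_eq_single n]
        · rw [Set.indicator_of_mem (by exact hu), Set.indicator_of_mem (show u ∈ Dn n ∩ U ⁻¹' {x} from ⟨hn, hu⟩)]
        · intro m hm
          apply Set.indicator_of_notMem
          rintro ⟨h, _⟩
          exact Set.disjoint_left.1 (hdis hm) h hn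
      · rw [Set.indicator_of_notMem (by exact hu)]
        symm
        rw [ENNReal.tsum_eq_zero]
        intro n
        exact Set.indicator_of_notMem (fun h => hu h.2) _
    simp_rw [h1]
    rw [ENNReal.tsum_comm]
    congr 1
    ext n
    by_cases hxn : x ∈ U '' Dn n
    · obtain ⟨u, hu, rfl⟩ := hxn
      rw [hKv n u hu, tsum_eq_single u]
      · exact Set.indicator_of_mem (show u ∈ Dn n ∩ U ⁻¹' {U u} from ⟨hu, rfl⟩) _
      · intro v hv
        apply Set.indicator_of_notMem
        rintro ⟨h, h'⟩
        exact hv (hinj n h hu h')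
    · rw [hK0 n x hxn, ENNReal.tsum_eq_zero]
      intro u
      apply Set.indicator_of_notMem
      rintro ⟨h, h'⟩
      exact hxn ⟨u, h, h'⟩
  refine ⟨⟨fun x => ∑' n, K n x, Measurable.tsum hK, hsum⟩, ?_⟩
  rw [lintegral_congr_ae hsum, lintegral_tsum (fun n => (hK n).aemeasurable)]
  have hL : ∫⁻ u, ENNReal.ofReal |φ u| * H u = ∫⁻ u in D, ENNReal.ofReal |φ u| * H u := by
    rw [← lintegral_indicator hDm]
    refine lintegral_congr_ae ?_
    have : ∀ᵐ u : ℝ, u ∈ E := hE3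
    filter_upwards [this] with u hu
    by_cases h : φ u = 0
    · rw [Set.indicator_of_notMem (show u ∉ D from fun hh => hh.2 h)]; simp [h]
    · rw [Set.indicator_of_mem (show u ∈ D from ⟨hu, h⟩)]
  rw [hL, hDn, lintegral_iUnion hmeas hdis]
  congr 1
  ext n
  have hsub : ∀ u ∈ Dn n, u ∈ D := fun u hu => by rw [hDn]; exact Set.mem_iUnion.2 ⟨n, hu⟩
  have h2 := lintegral_image_eq_lintegral_abs_deriv_mul (hmeas n)
    (fun u hu => (hE1 u (hsub u hu).1).hasDerivWithinAt) (hinj n) (K n)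
  have him : MeasurableSet (U '' Dn n) := by
    have := (he n).measurableSet_range
    have h3 : Set.range (e n) = U '' Dn n := by
      ext x; simp [e]
    rwa [h3] at this
  have h4 : ∫⁻ x, K n x = ∫⁻ x in U '' Dn n, K n x := by
    rw [← lintegral_indicator him]
    congr 1
    ext x
    by_cases hx : x ∈ U '' Dn n
    · rw [Set.indicator_of_mem hx]
    · rw [Set.indicator_of_notMem hx, hK0 n x hx]
  rw [h4, h2]
  refine setLIntegral_congr_fun (hmeas n) ?_
  intro u hu
  simp only [hKv n u hu]

lemma crossing_pos (U : ℝ → ℝ) (d u : ℝ) (h : HasDerivAt U d u) (hd : 0 < d) :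
    ∀ᶠ v in nhds u, (v < u → U v < U u) ∧ (u < v → U u < U v) := by
  rw [hasDerivAt_iff_tendsto_slope] at h
  have h1 := h.eventually (lt_mem_nhds hd)
  rw [eventually_nhdsWithin_iff] at h1
  filter_upwards [h1] with v hv
  constructor
  · intro hvu
    have := hv (ne_of_lt hvu)
    rw [slope_def_field, div_pos_iff] at this
    rcases this with h | h <;> linarith [h.1, h.2]
  · intro hvu
    have := hv (ne_of_gt hvu)
    rw [slope_def_field, div_pos_iff] at this
    rcases this with h | h <;> linarith [h.1, h.2]

lemma cumF_map (m τ : Measure ℝ) [IsFiniteMeasure m] [IsFiniteMeasure τ] [NullSingletonClass τ]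
    (s : ℝ) : cumF (m.map (timeG τ)) (timeG τ s) = cumF m s := by
  have hm : Measurable (timeG τ) := (timeG τ).continuous.measurable
  rw [cumF_apply, cumF_apply, map_measureReal_apply hm measurableSet_Iic]
  congr 1
  ext; simp

lemma core2 (μ₁ μ₂ j₁ j₂ : Measure ℝ) [IsFiniteMeasure μ₁] [IsFiniteMeasure μ₂]
    [IsFiniteMeasure j₁] [IsFiniteMeasure j₂] [NullSingletonClass μ₁] [NullSingletonClass μ₂]
    (hsing : μ₁ ⟂ₘ μ₂) (C : Set ℝ) (hC : C.Countable) (hj₁ : j₁ Cᶜ = 0) (hj₂ : j₂ Cᶜ = 0)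
    (c : ℝ) (W : ℝ → ℝ)
    (hW : ∀ s, W s = c + cumF μ₁ s - cumF μ₂ s + cumF j₁ s - cumF j₂ s) :
    (∀ᵐ x : ℝ, ∀ s, W s = x → ContinuousAt W s ∧
      ((∀ᶠ r in nhds s, (r < s → W r < W s) ∧ (s < r → W s < W r)) ∨
       (∀ᶠ r in nhds s, (r < s → W s < W r) ∧ (s < r → W r < W s)))) ∧
    ∀ H : ℝ → ℝ≥0∞, Measurable H →
      AEMeasurable (fun x => ∑' u : ℝ, (W ⁻¹' {x}).indicator H u) ∧
      ∫⁻ u, H u ∂(μ₁ + μ₂) = ∫⁻ x, ∑' u : ℝ, (W ⁻¹' {x}).indicator H u := by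
  have hna : NullSingletonClass (μ₁ + μ₂) := ⟨fun x => by simp⟩
  set τ := μ₁ + μ₂ with hτ
  set G := timeG τ with hG
  have hGm : Measurable G := G.continuous.measurable
  have hGe : MeasurableEmbedding G := G.toHomeomorph.measurableEmbedding
  set p := μ₁.map G with hp
  set n := μ₂.map G with hn
  set k₁ := j₁.map G with hk₁
  set k₂ := j₂.map G with hk₂
  have hvol : (volume + τ).map G = volume := timeG_map τ
  have hpac : p ≪ volume := by
    rw [← hvol]
    refine Measure.AbsolutelyContinuous.map ?_ hGm
    refine Measure.absolutelyContinuous_of_le ?_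
    rw [hτ, ← add_assoc, add_right_comm]
    exact Measure.le_add_left le_rfl
  have hnac : n ≪ volume := by
    rw [← hvol]
    refine Measure.AbsolutelyContinuous.map ?_ hGm
    refine Measure.absolutelyContinuous_of_le ?_
    rw [hτ, ← add_assoc]
    exact Measure.le_add_left le_rfl
  have hGC : (G '' C).Countable := hC.image G
  have hk0 : ∀ j : Measure ℝ, j Cᶜ = 0 → (j.map G) (G '' C)ᶜ = 0 := by
    intro j hj
    rw [Measure.map_apply hGm hGC.measurableSet.compl, Set.preimage_compl,
      Set.preimage_image_eq _ G.injective, hj]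
  have hks : ∀ j : Measure ℝ, j Cᶜ = 0 → (j.map G) ⟂ₘ volume := by
    intro j hj
    refine ⟨(G '' C)ᶜ, hGC.measurableSet.compl, hk0 j hj, ?_⟩
    rw [compl_compl]; exact hGC.measure_zero _
  have hpn : p ⟂ₘ n := hGe.mutuallySingular_map hsing
  let U : ℝ → ℝ := fun u => c + cumF p u - cumF n u + cumF k₁ u - cumF k₂ u
  have hWU : ∀ s, W s = U (G s) := by
    intro s
    have e : ∀ (m : Measure ℝ) [IsFiniteMeasure m], cumF (m.map G) (G s) = cumF m s :=
      fun m _ => cumF_map m τ s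
    change _ = c + cumF (μ₁.map G) (G s) - cumF (μ₂.map G) (G s) + cumF (j₁.map G) (G s)
      - cumF (j₂.map G) (G s)
    rw [hW, e, e, e, e]
  let φ : ℝ → ℝ := fun u => (p.rnDeriv volume u).toReal - (n.rnDeriv volume u).toReal
  have hφ : Measurable φ := (Measure.measurable_rnDeriv _ _).ennreal_toReal.sub
    (Measure.measurable_rnDeriv _ _).ennreal_toReal
  have hU : Measurable U := by
    have h : ∀ (m : Measure ℝ) [IsFiniteMeasure m], Measurable (cumF m) :=
      fun m _ => (cumF m).mono.measurable
    exact (((measurable_const.add (h p)).sub (h n)).add (h k₁)).sub (h k₂)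
  have hder : ∀ (m : Measure ℝ) [IsFiniteMeasure m],
      ∀ᵐ u, HasDerivAt (cumF m) (m.rnDeriv volume u).toReal u := by
    intro m _
    have := (cumF m).ae_hasDerivAt
    rwa [cumF_measure] at this
  have hd : ∀ᵐ u : ℝ, HasDerivAt U (φ u) u := by
    filter_upwards [hder p, hder n, hder k₁, hder k₂, (hks j₁ hj₁).rnDeriv_ae_eq_zero,
      (hks j₂ hj₂).rnDeriv_ae_eq_zero] with u h1 h2 h3 h4 h5 h6
    rw [show k₁.rnDeriv volume u = 0 from h5] at h3
    rw [show k₂.rnDeriv volume u = 0 from h6] at h4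
    have := (((h1.const_add c).sub h2).add h3).sub h4
    have e : φ u = (p.rnDeriv volume u).toReal - (n.rnDeriv volume u).toReal
        + (0 : ℝ≥0∞).toReal - (0 : ℝ≥0∞).toReal := by simp [φ]
    rw [e]
    exact this
  have hN : ∀ N : Set ℝ, volume N = 0 → volume (U '' N) = 0 := by
    intro N hN
    have h1 : ∀ E, volume (U '' E) ≤ (p + n + k₁ + k₂) E := by
      intro E
      have := volume_image_le U (cumF (p + n + k₁ + k₂)) ?_ E
      · rwa [cumF_measure] at this
      · intro a b hab
        rw [cumF_sub _ hab]
        have e : U b - U a = p.real (Set.Ioc a b) - n.real (Set.Ioc a b) + k₁.real (Set.Ioc a b)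
            - k₂.real (Set.Ioc a b) := by
          rw [← cumF_sub _ hab, ← cumF_sub _ hab, ← cumF_sub _ hab, ← cumF_sub _ hab]
          simp only [U]; ring
        rw [e, measureReal_add_apply, measureReal_add_apply, measureReal_add_apply, abs_le]
        have h1 : 0 ≤ p.real (Set.Ioc a b) := measureReal_nonneg
        have h2 : 0 ≤ n.real (Set.Ioc a b) := measureReal_nonneg
        have h3 : 0 ≤ k₁.real (Set.Ioc a b) := measureReal_nonneg
        have h4 : 0 ≤ k₂.real (Set.Ioc a b) := measureReal_nonneg
        constructor <;> linarith
    have h2 : U '' N ⊆ U '' (G '' C) ∪ U '' (N \ G '' C) := by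
      rw [← Set.image_union]
      exact Set.image_mono (by intro x hx; by_cases h : x ∈ G '' C <;> simp_all)
    refine measure_mono_null h2 (measure_union_null ((hGC.image U).measure_zero _) ?_)
    refine le_antisymm ((h1 _).trans ?_) zero_le
    have hN' : volume (N \ G '' C) = 0 := measure_mono_null Set.sdiff_subset hN
    have hsub : N \ G '' C ⊆ (G '' C)ᶜ := fun x hx => hx.2
    rw [Measure.add_apply, Measure.add_apply, Measure.add_apply, hpac hN', hnac hN',
      measure_mono_null hsub (hk0 j₁ hj₁), measure_mono_null hsub (hk0 j₂ hj₂)]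
    simp
  obtain ⟨hA, hB⟩ := core1 U φ hφ hU hd hN
  have hWU' : W = U ∘ G := funext hWU
  refine ⟨?_, ?_⟩
  · filter_upwards [hA] with x hx s hs
    obtain ⟨h1, h2⟩ := hx (G s) ((hWU s).symm.trans hs)
    refine ⟨?_, ?_⟩
    · rw [hWU']
      exact ContinuousAt.comp h1.continuousAt G.continuous.continuousAt
    · rcases lt_or_gt_of_ne h2 with h2 | h2
      · right
        have := crossing_pos (fun v => - U v) _ _ h1.neg (neg_pos.2 h2)
        filter_upwards [(G.continuous.tendsto s).eventually this] with r hr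
        rw [hWU r, hWU s]
        exact ⟨fun h => neg_lt_neg_iff.1 (hr.1 (G.lt_iff_lt.2 h)),
          fun h => neg_lt_neg_iff.1 (hr.2 (G.lt_iff_lt.2 h))⟩
      · left
        have := crossing_pos U _ _ h1 h2
        filter_upwards [(G.continuous.tendsto s).eventually this] with r hr
        rw [hWU r, hWU s]
        exact ⟨fun h => hr.1 (G.lt_iff_lt.2 h), fun h => hr.2 (G.lt_iff_lt.2 h)⟩
  · intro H hH
    have hH' : Measurable (H ∘ G.symm) := hH.comp G.symm.continuous.measurable
    obtain ⟨h1, h2⟩ := hB (H ∘ G.symm) hH'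
    have hts : (fun x => ∑' u : ℝ, (U ⁻¹' {x}).indicator (H ∘ G.symm) u) =
        fun x => ∑' u : ℝ, (W ⁻¹' {x}).indicator H u := by
      ext x
      rw [← G.toEquiv.tsum_eq]
      congr 1
      ext s
      change (U ⁻¹' {x}).indicator (H ∘ G.symm) (G s) = _
      by_cases h : W s = x
      · rw [Set.indicator_of_mem (show s ∈ W ⁻¹' {x} from h),
          Set.indicator_of_mem (show G s ∈ U ⁻¹' {x} from (hWU s).symm.trans h)]
        simp
      · rw [Set.indicator_of_notMem (show s ∉ W ⁻¹' {x} from h),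
          Set.indicator_of_notMem (show G s ∉ U ⁻¹' {x} from fun h' => h ((hWU s).trans h'))]
    rw [hts] at h1
    refine ⟨h1, ?_⟩
    rw [← hts, ← h2]
    have h3 : ∫⁻ u, H u ∂τ = ∫⁻ u, (H ∘ G.symm) u ∂(p + n) := by
      rw [hp, hn, ← Measure.map_add _ _ hGm, lintegral_map hH' hGm]
      simp [hτ]
    have hsum : p + n = volume.withDensity (fun u => ENNReal.ofReal |φ u|) := by
      conv_lhs => rw [← Measure.withDensity_rnDeriv_eq p volume hpac,
        ← Measure.withDensity_rnDeriv_eq n volume hnac]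
      rw [← withDensity_add_left (Measure.measurable_rnDeriv _ _)]
      refine withDensity_congr_ae ?_
      obtain ⟨S, hS, hS1, hS2⟩ := hpn
      have e1 : ∀ᵐ u : ℝ, u ∈ S → p.rnDeriv volume u = 0 := by
        rw [← ae_restrict_iff' hS]
        have : ∫⁻ u in S, p.rnDeriv volume u = 0 := by
          rw [← withDensity_apply _ hS, Measure.withDensity_rnDeriv_eq p volume hpac, hS1]
        exact (lintegral_eq_zero_iff (Measure.measurable_rnDeriv _ _)).1 this
      have e2 : ∀ᵐ u : ℝ, u ∈ Sᶜ → n.rnDeriv volume u = 0 := by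
        rw [← ae_restrict_iff' hS.compl]
        have : ∫⁻ u in Sᶜ, n.rnDeriv volume u = 0 := by
          rw [← withDensity_apply _ hS.compl, Measure.withDensity_rnDeriv_eq n volume hnac, hS2]
        exact (lintegral_eq_zero_iff (Measure.measurable_rnDeriv _ _)).1 this
      filter_upwards [e1, e2, p.rnDeriv_lt_top volume, n.rnDeriv_lt_top volume] with u e1 e2 e3 e4
      simp only [Pi.add_apply, φ]
      by_cases hu : u ∈ S
      · rw [e1 hu]
        simp [ENNReal.ofReal_toReal e4.ne]
      · rw [e2 hu]
        simp [ENNReal.ofReal_toReal e3.ne]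
    rw [h3, hsum, lintegral_withDensity_eq_lintegral_mul _ (by fun_prop) hH']
    rfl

lemma jump_measures (D : ℝ → ℝ) (hD : Summable fun u => |D u|) :
    ∃ (j₁ j₂ : Measure ℝ) (C : Set ℝ), IsFiniteMeasure j₁ ∧ IsFiniteMeasure j₂ ∧ C.Countable ∧
      j₁ Cᶜ = 0 ∧ j₂ Cᶜ = 0 ∧
      ∀ A, MeasurableSet A → j₁.real A - j₂.real A = ∑' u, A.indicator D u := by
  let j : (ℝ → ℝ) → Measure ℝ := fun E => Measure.sum (fun u => ENNReal.ofReal (E u) • Measure.dirac u)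
  have hj : ∀ E A, MeasurableSet A → j E A = ∑' u, ENNReal.ofReal (A.indicator E u) := by
    intro E A hA
    simp only [j]
    rw [Measure.sum_apply _ hA]
    congr 1
    ext u
    by_cases hu : u ∈ A <;> simp [hu, Measure.dirac_apply' _ hA]
  have hfin : ∀ E : ℝ → ℝ, (∀ u, |E u| = |D u|) → ∀ A : Set ℝ,
      ∑' u, ENNReal.ofReal (A.indicator E u) ≠ ⊤ := by
    intro E hE A
    refine ne_top_of_le_ne_top hD.tsum_ofReal_ne_top (ENNReal.tsum_le_tsum fun u => ?_)
    apply ENNReal.ofReal_le_ofReal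
    rw [← hE u]
    by_cases hu : u ∈ A
    · rw [Set.indicator_of_mem hu]; exact le_abs_self _
    · rw [Set.indicator_of_notMem hu]; exact abs_nonneg _
  have hC : (Function.support D).Countable := by
    have := hD.countable_support
    simpa [Function.support] using this
  have hCm := hC.measurableSet
  have hn : ∀ u, |(fun u => -D u) u| = |D u| := fun u => abs_neg _
  have hz : ∀ E : ℝ → ℝ, (∀ u, |E u| = |D u|) → j E (Function.support D)ᶜ = 0 := by
    intro E hE
    rw [hj E _ hCm.compl, ENNReal.tsum_eq_zero]
    intro u
    by_cases hu : D u = 0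
    · have : E u = 0 := by have := hE u; rw [hu, abs_zero] at this; exact abs_eq_zero.1 this
      simp [Set.indicator, this]
    · simp [Set.indicator, hu]
  refine ⟨j D, j (fun u => - D u), Function.support D, ⟨?_⟩, ⟨?_⟩, hC, hz D (fun _ => rfl),
    hz _ hn, ?_⟩
  · rw [hj _ _ MeasurableSet.univ]; exact (hfin D (fun _ => rfl) _).lt_top
  · rw [hj _ _ MeasurableSet.univ]; exact (hfin _ hn _).lt_top
  · intro A hA
    rw [measureReal_def, measureReal_def, hj _ _ hA, hj _ _ hA,
      ENNReal.tsum_toReal_eq (fun _ => ENNReal.ofReal_ne_top),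
      ENNReal.tsum_toReal_eq (fun _ => ENNReal.ofReal_ne_top),
      ← Summable.tsum_sub (ENNReal.summable_toReal (hfin D (fun _ => rfl) A))
        (ENNReal.summable_toReal (hfin _ hn A))]
    congr 1
    ext u
    by_cases hu : u ∈ A
    · simp only [Set.indicator_of_mem hu, ENNReal.toReal_ofReal']
      rcases le_total 0 (D u) with h | h
      · rw [max_eq_left h, max_eq_right (by linarith)]; ring
      · rw [max_eq_right h, max_eq_left (by linarith)]; ring
    · simp [hu]

lemma core3 (W : ℝ → ℝ) (μ : Measure ℝ) [IsFiniteMeasure μ]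
    (hH : ∀ H : ℝ → ℝ≥0∞, Measurable H →
      AEMeasurable (fun x => ∑' u : ℝ, (W ⁻¹' {x}).indicator H u) ∧
      ∫⁻ u, H u ∂μ = ∫⁻ x, ∑' u : ℝ, (W ⁻¹' {x}).indicator H u) :
    (∀ᵐ x : ℝ, (W ⁻¹' {x}).Finite) ∧
    ∀ h : ℝ → ℝ, Measurable h → (∃ C, ∀ s, |h s| ≤ C) →
      ∫ s, h s ∂μ = ∫ x, ∑ᶠ s ∈ W ⁻¹' {x}, h s := by
  have hfin : ∀ᵐ x : ℝ, (W ⁻¹' {x}).Finite := by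
    obtain ⟨h1, h2⟩ := hH (fun _ => 1) measurable_const
    have h3 : ∫⁻ x, ∑' u : ℝ, (W ⁻¹' {x}).indicator (fun _ => (1 : ℝ≥0∞)) u ≠ ⊤ := by
      rw [← h2]; simp
    filter_upwards [ae_lt_top' h1 h3] with x hx
    refine (ENNReal.finite_const_le_of_tsum_ne_top hx.ne one_ne_zero).subset ?_
    intro u hu
    change (1 : ℝ≥0∞) ≤ _
    rw [Set.indicator_of_mem hu]
  refine ⟨hfin, ?_⟩
  intro h hm ⟨C, hC⟩
  have hint : Integrable h μ := by
    refine Integrable.of_bound hm.aestronglyMeasurable C (Eventually.of_forall hC)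
  have key : ∀ k : ℝ → ℝ, Measurable k → (∀ s, |k s| ≤ C) →
      Integrable (fun x => (∑' u : ℝ, (W ⁻¹' {x}).indicator (fun u => ENNReal.ofReal (k u)) u).toReal) ∧
      (∫⁻ s, ENNReal.ofReal (k s) ∂μ).toReal =
        ∫ x, (∑' u : ℝ, (W ⁻¹' {x}).indicator (fun u => ENNReal.ofReal (k u)) u).toReal := by
    intro k hk hkC
    obtain ⟨h1, h2⟩ := hH (fun u => ENNReal.ofReal (k u)) hk.ennreal_ofReal
    have h3 : ∫⁻ s, ENNReal.ofReal (k s) ∂μ ≠ ⊤ := by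
      refine ne_top_of_le_ne_top (b := ∫⁻ s, ENNReal.ofReal C ∂μ) ?_
        (lintegral_mono fun s => ENNReal.ofReal_le_ofReal ((le_abs_self _).trans (hkC s)))
      rw [lintegral_const]
      exact ENNReal.mul_ne_top ENNReal.ofReal_ne_top (measure_ne_top _ _)
    rw [h2] at h3
    refine ⟨integrable_toReal_of_lintegral_ne_top h1 h3, ?_⟩
    rw [integral_toReal h1 (ae_lt_top' h1 h3), h2]
  obtain ⟨a1, a2⟩ := key h hm hC
  obtain ⟨b1, b2⟩ := key (fun s => - h s) hm.neg (fun s => by rw [abs_neg]; exact hC s)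
  rw [integral_eq_lintegral_pos_part_sub_lintegral_neg_part hint, a2, b2, ← integral_sub a1 b1]
  refine integral_congr_ae ?_
  filter_upwards [hfin] with x hx
  have e : ∀ k : ℝ → ℝ, (∑' u : ℝ, (W ⁻¹' {x}).indicator (fun u => ENNReal.ofReal (k u)) u).toReal =
      ∑ s ∈ hx.toFinset, max (k s) 0 := by
    intro k
    rw [tsum_eq_sum (s := hx.toFinset), ENNReal.toReal_sum]
    · refine Finset.sum_congr rfl fun s hs => ?_
      rw [Set.indicator_of_mem ((Set.Finite.mem_toFinset hx).1 hs), ENNReal.toReal_ofReal']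
    · intro s hs
      rw [Set.indicator_of_mem ((Set.Finite.mem_toFinset hx).1 hs)]
      exact ENNReal.ofReal_ne_top
    · intro s hs
      exact Set.indicator_of_notMem (fun h => hs ((Set.Finite.mem_toFinset hx).2 h)) _
  rw [e, e, finsum_mem_eq_finite_toFinset_sum _ hx, ← Finset.sum_sub_distrib]
  refine Finset.sum_congr rfl fun s _ => ?_
  rcases le_total 0 (h s) with h | h
  · rw [max_eq_left h, max_eq_right (by linarith)]; ring
  · rw [max_eq_right h, max_eq_left (by linarith)]; ring

lemma jordan_sub (μc : SignedMeasure ℝ) (A : Set ℝ) (hA : MeasurableSet A) :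
    μc A = μc.toJordanDecomposition.posPart.real A - μc.toJordanDecomposition.negPart.real A := by
  conv_lhs => rw [← SignedMeasure.toSignedMeasure_toJordanDecomposition μc]
  rw [JordanDecomposition.toSignedMeasure, sub_apply,
    Measure.toSignedMeasure_apply_measurable hA, Measure.toSignedMeasure_apply_measurable hA]

lemma no_atoms_jordan (Vc : ℝ → ℝ) (hVc_cont : ContinuousOn Vc (Set.Ici 0)) (t : ℝ)
    (μc : SignedMeasure ℝ)
    (hμc : ∀ a b : ℝ, 0 ≤ a → a ≤ b → b ≤ t → μc (Set.Ioc a b) = Vc b - Vc a)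
    (s : ℝ) (hs : s ∈ Set.Ioc 0 t) :
    μc.toJordanDecomposition.posPart {s} = 0 ∧ μc.toJordanDecomposition.negPart {s} = 0 := by
  set p := μc.toJordanDecomposition.posPart with hp
  set n := μc.toJordanDecomposition.negPart with hn
  have h1 := (cumF p).mono.tendsto_leftLim s
  have h2 := (cumF n).mono.tendsto_leftLim s
  have hev : ∀ᶠ r in nhdsWithin s (Set.Iio s), Vc s - Vc r =
      (cumF p s - cumF p r) - (cumF n s - cumF n r) := by
    filter_upwards [Ioo_mem_nhdsLT hs.1] with r hr
    rw [cumF_sub _ hr.2.le, cumF_sub _ hr.2.le, ← hμc r s hr.1.le hr.2.le hs.2,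
      jordan_sub _ _ measurableSet_Ioc]
  have h3 : Tendsto Vc (nhdsWithin s (Set.Iio s)) (nhds (Vc s)) :=
    ((hVc_cont.continuousAt (Ici_mem_nhds hs.1)).tendsto).mono_left nhdsWithin_le_nhds
  have h4 : Tendsto (fun r => Vc s - Vc r) (nhdsWithin s (Set.Iio s)) (nhds (Vc s - Vc s)) :=
    tendsto_const_nhds.sub h3
  have h5 := ((tendsto_const_nhds (x := cumF p s)).sub h1).sub
    ((tendsto_const_nhds (x := cumF n s)).sub h2)
  have h6 := tendsto_nhds_unique (h4.congr' hev) h5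
  have e1 : p {s} = ENNReal.ofReal (cumF p s - Function.leftLim (cumF p) s) := by
    rw [← StieltjesFunction.measure_singleton, cumF_measure]
  have e2 : n {s} = ENNReal.ofReal (cumF n s - Function.leftLim (cumF n) s) := by
    rw [← StieltjesFunction.measure_singleton, cumF_measure]
  have e3 : p {s} = n {s} := by rw [e1, e2]; congr 1; linarith
  obtain ⟨S, hS, hS1, hS2⟩ := μc.toJordanDecomposition.mutuallySingular
  by_cases hsS : s ∈ S
  · have : p {s} = 0 := measure_mono_null (Set.singleton_subset_iff.2 hsS) hS1
    exact ⟨this, e3 ▸ this⟩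
  · have : n {s} = 0 := measure_mono_null (Set.singleton_subset_iff.2 hsS) hS2
    exact ⟨e3.trans this, this⟩
/-- Let `V` be càdlàg on `[0,∞)` with finite variation on compacts,
with canonical decomposition `V = Vc + Vd`, and let `μc` be the signed Stieltjes measure
of `Vc` on `[0,t]`, with total variation measure `|μc|`. For all bounded measurable
`f : ℝ → ℝ` and `g : [0,t] → ℝ`,
`∫_0^t f(V s) g(s) |μc|(ds) = ∫_ℝ (∫_{[0,t]} g(s) λ^x(ds)) f(x) dx`, where for a.e. `x`
the point measure `λ^x(ds) = Σ_{s ∈ ℐ(x) ∪ 𝒟(x)} δ_s` places a unit atom at each passage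
time, so that `∫_{[0,t]} g(s) λ^x(ds) = Σ_{s ∈ (0,t] ∩ (ℐ(x) ∪ 𝒟(x))} g(s)`. -/
theorem fubini_abs_local_time
    (V Vm Vc Vd : ℝ → ℝ)
    (hV_rc : ∀ s ∈ Set.Ici (0 : ℝ), ContinuousWithinAt V (Set.Ici s) s)
    (hV_ll : ∀ s ∈ Set.Ioi (0 : ℝ),
      Filter.Tendsto V (nhdsWithin s (Set.Iio s)) (nhds (Vm s)))
    (hV_bv : ∀ T : ℝ, BoundedVariationOn V (Set.Icc 0 T))
    (hdecomp : ∀ s ∈ Set.Ici (0 : ℝ), V s = Vc s + Vd s)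
    (hVc_cont : ContinuousOn Vc (Set.Ici 0))
    (hVc_bv : ∀ T : ℝ, BoundedVariationOn Vc (Set.Icc 0 T))
    (hVd_sum : ∀ s ∈ Set.Ici (0 : ℝ),
      HasSum (fun u : Set.Ioc (0 : ℝ) s => V u.1 - Vm u.1) (Vd s))
    (hVd_abs : ∀ s ∈ Set.Ici (0 : ℝ),
      Summable (fun u : Set.Ioc (0 : ℝ) s => |V u.1 - Vm u.1|))
    (t : ℝ) (ht : 0 < t)
    (μc : MeasureTheory.SignedMeasure ℝ)
    (hμc : ∀ a b : ℝ, 0 ≤ a → a ≤ b → b ≤ t → μc (Set.Ioc a b) = Vc b - Vc a)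
    (f g : ℝ → ℝ) (hf_meas : Measurable f) (hf_bdd : ∃ C : ℝ, ∀ y, |f y| ≤ C)
    (hg_meas : Measurable g) (hg_bdd : ∃ C : ℝ, ∀ s, |g s| ≤ C) :
    (∀ᵐ x : ℝ ∂volume, (incSet V x t).Finite ∧ (decSet V x t).Finite) ∧
      (∫ s in Set.Ioc (0 : ℝ) t, f (V s) * g s ∂μc.totalVariation) =
        ∫ x : ℝ, (∑ᶠ s ∈ (incSet V x t ∪ decSet V x t), g s) * f x ∂volume := by
  set P := μc.toJordanDecomposition.posPart with hP
  set N := μc.toJordanDecomposition.negPart with hN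
  set I := Set.Ioc (0 : ℝ) t with hI
  have hIm : MeasurableSet I := measurableSet_Ioc
  have hat := no_atoms_jordan Vc hVc_cont t μc hμc
  have hr : ∀ m : Measure ℝ, (∀ s ∈ I, m {s} = 0) → NullSingletonClass (m.restrict I) := by
    intro m hm
    refine ⟨fun s => ?_⟩
    rw [Measure.restrict_apply (measurableSet_singleton s)]
    by_cases hs : s ∈ I
    · exact measure_mono_null Set.inter_subset_left (hm s hs)
    · have : ({s} : Set ℝ) ∩ I = ∅ := by
        ext y; simp only [Set.mem_inter_iff, Set.mem_singleton_iff, Set.mem_empty_iff_false,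
          iff_false]
        rintro ⟨rfl, h⟩; exact hs h
      rw [this, measure_empty]
  have hn1 : NullSingletonClass (P.restrict I) := hr P fun s hs => (hat s hs).1
  have hn2 : NullSingletonClass (N.restrict I) := hr N fun s hs => (hat s hs).2
  have hsing : P.restrict I ⟂ₘ N.restrict I :=
    (μc.toJordanDecomposition.mutuallySingular).mono Measure.restrict_le_self
      Measure.restrict_le_self
  let D : ℝ → ℝ := I.indicator (fun u => V u - Vm u)
  have hDs : Summable fun u => |D u| := by
    have h := hVd_abs t ht.le
    have h2 := (summable_subtype_iff_indicator (s := I) (f := fun u => |V u - Vm u|)).1 h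
    refine h2.congr fun u => ?_
    by_cases hu : u ∈ I <;> simp [D, hu]
  obtain ⟨j₁, j₂, C, hf1, hf2, hC, hj1, hj2, hj⟩ := jump_measures D hDs
  let W : ℝ → ℝ := fun s => V 0 + cumF (P.restrict I) s - cumF (N.restrict I) s + cumF j₁ s
    - cumF j₂ s
  have hWV : ∀ s, W s = V (max 0 (min s t)) := by
    intro s
    set s' := max 0 (min s t) with hs'
    have h0 : 0 ≤ s' := le_max_left _ _
    have hst : s' ≤ t := max_le ht.le (min_le_right _ _)
    have hset : Set.Iic s ∩ I = Set.Ioc 0 s' := by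
      ext y
      simp only [hI, hs', Set.mem_inter_iff, Set.mem_Iic, Set.mem_Ioc, le_max_iff, le_min_iff]
      constructor
      · rintro ⟨h1, h2, h3⟩; exact ⟨h2, Or.inr ⟨h1, h3⟩⟩
      · rintro ⟨h1, h2 | h2⟩
        · exact absurd h1 (not_lt.2 h2)
        · exact ⟨h2.1, h1, h2.2⟩
    have e1 : cumF (P.restrict I) s - cumF (N.restrict I) s = Vc s' - Vc 0 := by
      rw [cumF_apply, cumF_apply, measureReal_restrict_apply measurableSet_Iic,
        measureReal_restrict_apply measurableSet_Iic, hset, ← jordan_sub _ _ measurableSet_Ioc,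
        hμc 0 s' le_rfl h0 hst]
    have e2 : cumF j₁ s - cumF j₂ s = Vd s' := by
      rw [cumF_apply, cumF_apply, hj _ measurableSet_Iic, ← (hVd_sum s' h0).tsum_eq]
      simp only [D, Set.indicator_indicator, hset]
      exact (tsum_subtype (Set.Ioc 0 s') (fun u => V u - Vm u)).symm
    have e3 : Vd 0 = 0 := by
      rw [← (hVd_sum 0 (Set.mem_Ici.2 le_rfl)).tsum_eq]
      have : IsEmpty (Set.Ioc (0 : ℝ) 0) := by simp
      exact tsum_empty
    have e4 := hdecomp 0 (Set.mem_Ici.2 le_rfl)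
    have e5 := hdecomp s' h0
    simp only [W]
    linarith
  have hWV' : ∀ s, 0 ≤ s → s ≤ t → W s = V s := by
    intro s h1 h2
    rw [hWV, min_eq_left h2, max_eq_right h1]
  obtain ⟨hA, hB⟩ := core2 (P.restrict I) (N.restrict I) j₁ j₂ hsing C hC hj1 hj2 (V 0) W
    (fun _ => rfl)
  obtain ⟨hfin, hint⟩ := core3 W (P.restrict I + N.restrict I) hB
  have hne : ∀ y : ℝ, ∀ᵐ x : ℝ, x ≠ y := fun y => by
    have : ∀ᵐ x : ℝ, x ∉ ({y} : Set ℝ) := measure_eq_zero_iff_ae_notMem.1 (by simp)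
    simpa using this
  have hset : ∀ᵐ x : ℝ, incSet V x t ∪ decSet V x t = W ⁻¹' {x} := by
    filter_upwards [hA, hne (V 0), hne (V t)] with x hx hx0 hxt
    ext s
    constructor
    · rintro (⟨hs, hs2⟩ | ⟨hs, hs2⟩)
      · change W s = x
        rw [hWV' s hs.1.le hs.2]; exact hs2.2.1
      · change W s = x
        rw [hWV' s hs.1.le hs.2]; exact neg_injective hs2.2.1
    · intro hs
      have hs : W s = x := hs
      have hs0 : 0 < s := by
        by_contra h
        rw [not_lt] at h
        apply hx0
        rw [← hs, hWV, min_eq_left (h.trans ht.le), max_eq_left h]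
      have hs1 : s < t := by
        by_contra h
        rw [not_lt] at h
        apply hxt
        rw [← hs, hWV, min_eq_right h, max_eq_right ht.le]
      have hVs : V s = x := by rw [← hWV' s hs0.le hs1.le, hs]
      have hloc : ∀ᶠ r in nhds s, W r = V r := by
        filter_upwards [Ioo_mem_nhds hs0 hs1] with r hr
        exact hWV' r hr.1.le hr.2.le
      obtain ⟨hc, hcr⟩ := hx s hs
      have hcV : ContinuousAt V s := hc.congr hloc
      rcases hcr with hcr | hcr
      · left
        refine ⟨⟨hs0, hs1.le⟩, hs0, hVs, hcV.continuousWithinAt, ?_⟩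
        obtain ⟨ε, hε, h⟩ := Metric.eventually_nhds_iff.1 (hcr.and hloc)
        refine ⟨ε, hε, fun r _ hr => ?_⟩
        have := h (y := r) (by rw [Real.dist_eq]; exact hr)
        rw [this.2, hWV' s hs0.le hs1.le] at this
        exact this.1
      · right
        refine ⟨⟨hs0, hs1.le⟩, hs0, by simp [hVs], hcV.neg.continuousWithinAt, ?_⟩
        obtain ⟨ε, hε, h⟩ := Metric.eventually_nhds_iff.1 (hcr.and hloc)
        refine ⟨ε, hε, fun r _ hr => ?_⟩
        have := h (y := r) (by rw [Real.dist_eq]; exact hr)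
        rw [this.2, hWV' s hs0.le hs1.le] at this
        exact ⟨fun h => neg_lt_neg (this.1.1 h), fun h => neg_lt_neg (this.1.2 h)⟩
  refine ⟨?_, ?_⟩
  · filter_upwards [hset, hfin] with x h1 h2
    rw [← h1] at h2
    exact ⟨h2.subset Set.subset_union_left, h2.subset Set.subset_union_right⟩
  · have hWm : Measurable W := by
      have h : ∀ (m : Measure ℝ) [IsFiniteMeasure m], Measurable (cumF m) :=
        fun m _ => (cumF m).mono.measurable
      exact (((measurable_const.add (h _)).sub (h _)).add (h j₁)).sub (h j₂)
    have hb : ∃ C, ∀ s, |f (W s) * g s| ≤ C := by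
      obtain ⟨Cf, hCf⟩ := hf_bdd
      obtain ⟨Cg, hCg⟩ := hg_bdd
      refine ⟨Cf * Cg, fun s => ?_⟩
      rw [abs_mul]
      exact mul_le_mul (hCf _) (hCg _) (abs_nonneg _) ((abs_nonneg _).trans (hCf 0))
    have h1 := hint (fun s => f (W s) * g s) ((hf_meas.comp hWm).mul hg_meas) hb
    have h2 : ∫ s in I, f (V s) * g s ∂μc.totalVariation =
        ∫ s, f (W s) * g s ∂(P.restrict I + N.restrict I) := by
      rw [SignedMeasure.totalVariation, ← Measure.restrict_add]
      refine setIntegral_congr_fun hIm fun s hs => ?_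
      simp only [hWV' s hs.1.le hs.2]
    rw [h2, h1]
    refine integral_congr_ae ?_
    filter_upwards [hset, hfin] with x h3 h4
    rw [h3, finsum_mem_eq_finite_toFinset_sum _ h4, finsum_mem_eq_finite_toFinset_sum _ h4,
      Finset.sum_mul]
    refine Finset.sum_congr rfl fun s hs => ?_
    have : W s = x := (Set.Finite.mem_toFinset h4).1 hs
    rw [this, mul_comm]
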